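/- Let F be a Minkowski norm on ℝⁿ, let Ω ⊆ ℝⁿ be an open set with smooth boundary such that Ω^c is bounded, let 1 < p < n, and let u_p be the C¹ weak solution of div(F(∇u)^{p−1} F_ξ(∇u)) = F(∇u)^p in Ω with u_p = 0 on ∂Ω and u_p → +∞ at infinity. If the Wulff shape W_r(x₀) is contained in Ω^c, then u_p(x) ≤ (n−p)·log(F^o(x−x₀)/r) for all x ∈ Ω. -/

import Mathlib

open MeasureTheory Filter Topology Metric Set
open scoped RealInnerProductSpace NNReal

noncomputable section

abbrev En (n : ℕ) := EuclideanSpace ℝ (Fin n)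

/-- A Minkowski norm on ℝⁿ: a norm (convex, even, 1-homogeneous, positive away from 0)
which is smooth away from the origin and whose Hessian of `F²/2` is positive definite
on `ℝⁿ \ {0}`. -/
structure MinkowskiNorm (n : ℕ) where
  F : En n → ℝ
  convexOn : ConvexOn ℝ Set.univ F
  even : ∀ ξ, F (-ξ) = F ξ
  homog : ∀ c : ℝ, 0 ≤ c → ∀ ξ, F (c • ξ) = c * F ξ
  pos : ∀ ξ : En n, ξ ≠ 0 → 0 < F ξ
  smooth : ContDiffOn ℝ (⊤ : ℕ∞) F {(0 : En n)}ᶜ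
  elliptic : ∀ ξ : En n, ξ ≠ 0 → ∀ v : En n, v ≠ 0 →
    0 < fderiv ℝ (fun x => fderiv ℝ (fun y => F y ^ 2 / 2) x) ξ v v

/-- Locally Lipschitz on a set (i.e. `C^{0,1}_loc`). -/
def LocLipOn {n : ℕ} (f : En n → ℝ) (s : Set (En n)) : Prop :=
  ∀ x ∈ s, ∃ (K : ℝ≥0) (t : Set (En n)), t ∈ nhdsWithin x s ∧ LipschitzOnWith K f t

/-- Weak solution of `div(F_ξ(∇u)) = F(∇u)` in `Ω` in the sense of Huisken–Ilmanen's
minimization principle. -/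
def IsWeakSolIAMCF {n : ℕ} (N : MinkowskiNorm n) (Ω : Set (En n)) (u : En n → ℝ) : Prop :=
  LocLipOn u Ω ∧
  ∀ K : Set (En n), IsCompact (closure K) → closure K ⊆ Ω →
    ∀ φ : En n → ℝ, LocLipOn φ Ω → (∀ x ∈ Ω \ K, φ x = u x) →
      (∫ x in K, (N.F (gradient u x) + u x * N.F (gradient u x))) ≤
        ∫ x in K, (N.F (gradient φ x) + φ x * N.F (gradient u x))

/-- Weak subsolution: the minimization inequality holds for competitors `φ ≤ u`. -/
def IsWeakSubSolIAMCF {n : ℕ} (N : MinkowskiNorm n) (Ω : Set (En n)) (u : En n → ℝ) : Prop :=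
  LocLipOn u Ω ∧
  ∀ K : Set (En n), IsCompact (closure K) → closure K ⊆ Ω →
    ∀ φ : En n → ℝ, LocLipOn φ Ω → (∀ x ∈ Ω \ K, φ x = u x) → (∀ x ∈ Ω, φ x ≤ u x) →
      (∫ x in K, (N.F (gradient u x) + u x * N.F (gradient u x))) ≤
        ∫ x in K, (N.F (gradient φ x) + φ x * N.F (gradient u x))

/-- Weak supersolution: the minimization inequality holds for competitors `φ ≥ u`. -/
def IsWeakSuperSolIAMCF {n : ℕ} (N : MinkowskiNorm n) (Ω : Set (En n)) (u : En n → ℝ) : Prop :=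
  LocLipOn u Ω ∧
  ∀ K : Set (En n), IsCompact (closure K) → closure K ⊆ Ω →
    ∀ φ : En n → ℝ, LocLipOn φ Ω → (∀ x ∈ Ω \ K, φ x = u x) → (∀ x ∈ Ω, u x ≤ φ x) →
      (∫ x in K, (N.F (gradient u x) + u x * N.F (gradient u x))) ≤
        ∫ x in K, (N.F (gradient φ x) + φ x * N.F (gradient u x))

/-- A smooth compactly supported test function on `Ω`. -/
def IsTestFun {n : ℕ} (Ω : Set (En n)) (ψ : En n → ℝ) : Prop :=
  ContDiff ℝ (⊤ : ℕ∞) ψ ∧ HasCompactSupport ψ ∧ tsupport ψ ⊆ Ω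

/-- Weak solution of the Finsler `p`-Laplace equation `div(F(∇v)^{p-1} F_ξ(∇v)) = 0` in `Ω`. -/
def IsWeakPHarmonic {n : ℕ} (N : MinkowskiNorm n) (Ω : Set (En n)) (p : ℝ)
    (v : En n → ℝ) : Prop :=
  ∀ ψ : En n → ℝ, IsTestFun Ω ψ →
    (∫ x in Ω, N.F (gradient v x) ^ (p - 1) *
      ⟪gradient N.F (gradient v x), gradient ψ x⟫) = 0

/-- Weak solution of `div(F(∇u)^{p-1} F_ξ(∇u)) = F(∇u)^p` in `Ω`. -/
def IsWeakPSol {n : ℕ} (N : MinkowskiNorm n) (Ω : Set (En n)) (p : ℝ)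
    (u : En n → ℝ) : Prop :=
  ∀ ψ : En n → ℝ, IsTestFun Ω ψ →
    (∫ x in Ω, N.F (gradient u x) ^ (p - 1) *
      ⟪gradient N.F (gradient u x), gradient ψ x⟫) =
      - ∫ x in Ω, N.F (gradient u x) ^ p * ψ x

/-- The polar (dual) norm `F^o(x) = sup_{ξ ≠ 0} ⟨ξ, x⟩ / F(ξ)`. -/
def polarF {n : ℕ} (N : MinkowskiNorm n) (x : En n) : ℝ :=
  sSup {c : ℝ | ∃ ξ : En n, ξ ≠ 0 ∧ c = ⟪ξ, x⟫ / N.F ξ}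

/-- The Wulff shape of radius `r` centered at `x₀`: `{x : F^o(x - x₀) < r}`. -/
def Wulff {n : ℕ} (N : MinkowskiNorm n) (r : ℝ) (x₀ : En n) : Set (En n) :=
  {x | polarF N (x - x₀) < r}

/-- `Ω` is an open set with smooth boundary: it is a smooth sublevel set of a smooth
function with nonvanishing gradient on the boundary. -/
def HasSmoothBoundary {n : ℕ} (Ω : Set (En n)) : Prop :=
  ∃ f : En n → ℝ, ContDiff ℝ (⊤ : ℕ∞) f ∧ Ω = {x | f x < 0} ∧
    ∀ x ∈ frontier Ω, fderiv ℝ f x ≠ 0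

/-- `C¹` on `s` with locally Hölder continuous gradient (i.e. `C^{1,α}_loc`). -/
def C1LocHolderOn {n : ℕ} (v : En n → ℝ) (s : Set (En n)) : Prop :=
  ContDiffOn ℝ 1 v s ∧
  ∀ x ∈ s, ∃ (α C : ℝ≥0), 0 < α ∧ (α : ℝ) ≤ 1 ∧
    ∃ t ∈ nhdsWithin x s, HolderOnWith C α (fun y => gradient v y) t

/-- Divergence of a vector field on `ℝⁿ`. -/
def divg {n : ℕ} (V : En n → En n) (x : En n) : ℝ :=
  ∑ i : Fin n, fderiv ℝ V x (EuclideanSpace.single i 1) i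

/-!
The substitution `v = -exp (-u / (p - 1))` is increasing and turns the equation for `u` into
`div (F(∇v)^{p-1} F_ξ(∇v)) = 0`. The barrier `(n - p) log (F^o(x - x₀) / r)` is transformed into a
negative multiple of the fundamental solution `F^o(x - x₀) ^ (-(n - p) / (p - 1))`: by the duality
`F_ξ(∇F^o(y)) = y / F^o(y)`, its flux is a multiple of the divergence-free field `y / F^o(y)^n`,
`y = x - x₀`. Since `F^o(x - x₀) ≥ r` off `W_r(x₀)`, the barrier is nonnegative on `∂Ω`, and the
transformed barrier tends to `0` at infinity, whereas `v < 0`. The comparison principle, which rests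
on the strict monotonicity of `ξ ↦ F(ξ)^{p-1} F_ξ(ξ)`, therefore applies even though `Ω` is
unbounded.
-/

open scoped Gradient ContDiff Convolution

section Calculus

variable {E : Type*} [NormedAddCommGroup E] [NormedSpace ℝ E]

lemma fderiv_fderiv_apply_self_eq_zero_of_eventually_const {G : E → ℝ} {m v : E} {c : ℝ}
    (hG : ContDiffAt ℝ 2 G m) (hc : ∀ᶠ t : ℝ in 𝓝 0, G (m + t • v) = c) :
    fderiv ℝ (fun x => fderiv ℝ G x) m v v = 0 := by
  have hline (s : ℝ) : HasDerivAt (fun t : ℝ => m + t • v) v s := by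
    simpa using ((hasDerivAt_id s).smul_const v).const_add m
  have hcont : Tendsto (fun t : ℝ => m + t • v) (𝓝 0) (𝓝 m) := by
    simpa using (hline 0).continuousAt.tendsto
  have hdiff : ∀ᶠ x in 𝓝 m, DifferentiableAt ℝ G x := by
    filter_upwards [hG.eventually (by simp)] with x hx using hx.differentiableAt (by norm_num)
  have hfirst : ∀ᶠ t : ℝ in 𝓝 0, fderiv ℝ G (m + t • v) v = 0 := by
    filter_upwards [hc.eventually_nhds, hcont.eventually hdiff] with t ht hd
    exact (hd.hasFDerivAt.comp_hasDerivAt t (hline t)).unique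
      ((hasDerivAt_const t c).congr_of_eventuallyEq ht)
  have hG' : HasFDerivAt (fun x => fderiv ℝ G x)
      (fderiv ℝ (fun x => fderiv ℝ G x) m) (m + (0 : ℝ) • v) := by
    have : ContDiffAt ℝ 1 (fun x => fderiv ℝ G x) m := hG.fderiv_right (by norm_num)
    simpa using (this.differentiableAt one_ne_zero).hasFDerivAt
  have hsecond : HasDerivAt (fun t : ℝ => fderiv ℝ G (m + t • v) v)
      (fderiv ℝ (fun x => fderiv ℝ G x) m v v) 0 :=
    (ContinuousLinearMap.apply ℝ ℝ v).hasFDerivAt.comp_hasDerivAt (0 : ℝ)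
      (hG'.comp_hasDerivAt (0 : ℝ) (hline 0))
  exact hsecond.unique ((hasDerivAt_const (0 : ℝ) (0 : ℝ)).congr_of_eventuallyEq hfirst)

lemma contDiff_of_contDiffAt_tsupport {F : Type*} [NormedAddCommGroup F] [NormedSpace ℝ F]
    {f : E → F} {k : WithTop ℕ∞} (h : ∀ x ∈ tsupport f, ContDiffAt ℝ k f x) :
    ContDiff ℝ k f := by
  refine contDiff_iff_contDiffAt.2 fun x => ?_
  by_cases hx : x ∈ tsupport f
  · exact h x hx
  · exact contDiffAt_const.congr_of_eventuallyEq (notMem_tsupport_iff_eventuallyEq.1 hx)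

lemma tsupport_indicator_subset_of_eq_zero {X M : Type*} [TopologicalSpace X] [Zero M]
    {Ω K : Set X} {f : X → M} (hK : IsClosed K) (h0 : ∀ x ∈ Ω \ K, f x = 0) :
    tsupport (Ω.indicator f) ⊆ K :=
  closure_minimal (fun _ hx => by
    obtain ⟨hxΩ, hfx⟩ := indicator_apply_ne_zero.1 hx
    exact by_contra fun hxK => hfx (h0 _ ⟨hxΩ, hxK⟩)) hK

lemma eventuallyEq_indicator {X M : Type*} [TopologicalSpace X] [Zero M] {Ω : Set X} {x : X}
    (f : X → M) (hΩ : IsOpen Ω) (hx : x ∈ Ω) : Ω.indicator f =ᶠ[𝓝 x] f :=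
  eqOn_indicator.eventuallyEq_of_mem (hΩ.mem_nhds hx)

lemma contDiff_indicator_of_tsupport_subset {Ω : Set E} {f : E → ℝ} {k : WithTop ℕ∞}
    (hΩ : IsOpen Ω) (hf : ContDiffOn ℝ k f Ω) (hs : tsupport (Ω.indicator f) ⊆ Ω) :
    ContDiff ℝ k (Ω.indicator f) :=
  contDiff_of_contDiffAt_tsupport fun _ hx =>
    (hf.contDiffAt (hΩ.mem_nhds (hs hx))).congr_of_eventuallyEq
      (eventuallyEq_indicator f hΩ (hs hx))

/- Mollification: for `C¹` data the convolution with a bump commutes with the derivative, so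
uniform continuity of `ψ` and of its derivative controls both errors. -/
lemma exists_contDiff_infty_approx [FiniteDimensional ℝ E] {ψ : E → ℝ} (hψ : ContDiff ℝ 1 ψ)
    (hc : HasCompactSupport ψ) (h0 : ∀ x, 0 ≤ ψ x) {δ ε : ℝ} (hδ : 0 < δ) (hε : 0 < ε) :
    ∃ φ : E → ℝ, ContDiff ℝ ∞ φ ∧ tsupport φ ⊆ cthickening δ (tsupport ψ) ∧ (∀ x, 0 ≤ φ x) ∧
      (∀ x, |φ x - ψ x| ≤ ε) ∧ ∀ x, ‖fderiv ℝ φ x - fderiv ℝ ψ x‖ ≤ ε := by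
  borelize E
  let μ : Measure E := Measure.addHaar
  have hψ' : Continuous (fderiv ℝ ψ) := hψ.continuous_fderiv one_ne_zero
  obtain ⟨δ₀, hδ₀, hunif₀⟩ := Metric.uniformContinuous_iff.1
    (hc.uniformContinuous_of_continuous hψ.continuous) ε hε
  obtain ⟨δ₁, hδ₁, hunif₁⟩ := Metric.uniformContinuous_iff.1
    ((hc.fderiv ℝ).uniformContinuous_of_continuous hψ') ε hε
  let R := min δ (min δ₀ δ₁)
  have hR : 0 < R := by positivity
  let ρ : ContDiffBump (0 : E) := ⟨R / 2, R, half_pos hR, half_lt_self hR⟩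
  let φ : E → ℝ := ρ.normed μ ⋆[ContinuousLinearMap.lsmul ℝ ℝ, μ] ψ
  have hderiv (x : E) : HasFDerivAt φ
      ((ρ.normed μ ⋆[ContinuousLinearMap.lsmul ℝ ℝ, μ] fderiv ℝ ψ) x) x :=
    hc.hasFDerivAt_convolution_right (ContinuousLinearMap.lsmul ℝ ℝ)
      ρ.continuous_normed.locallyIntegrable hψ x
  refine ⟨φ, ?_, closure_minimal ?_ isClosed_cthickening, fun x => ?_, fun x => ?_, fun x => ?_⟩
  · exact ρ.hasCompactSupport_normed.contDiff_convolution_left _ ρ.contDiff_normed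
      hψ.continuous.locallyIntegrable
  · refine (support_convolution_subset (ContinuousLinearMap.lsmul ℝ ℝ)).trans ?_
    rintro _ ⟨a, ha, b, hb, rfl⟩
    rw [ρ.support_normed_eq, mem_ball_zero_iff] at ha
    refine mem_cthickening_of_dist_le _ b δ _ (subset_tsupport _ hb) ?_
    simpa using ha.le.trans (min_le_left _ _)
  · exact integral_nonneg fun y => mul_nonneg (ρ.nonneg_normed y) (h0 _)
  · rw [← Real.dist_eq]
    refine ρ.dist_normed_convolution_le hψ.continuous.aestronglyMeasurable fun y hy => ?_
    exact (hunif₀ ((mem_ball.1 hy).trans_le ((min_le_right _ _).trans (min_le_left _ _)))).le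
  · rw [(hderiv x).fderiv, ← dist_eq_norm]
    refine ρ.dist_normed_convolution_le hψ'.aestronglyMeasurable fun y hy => ?_
    exact (hunif₁ ((mem_ball.1 hy).trans_le ((min_le_right _ _).trans (min_le_right _ _)))).le

lemma eq_zero_of_ae_fderiv_eq_zero [Nontrivial E] [MeasurableSpace E] {μ : Measure E}
    [μ.IsOpenPosMeasure] {η : E → ℝ} (hη : ContDiff ℝ 1 η) (hc : HasCompactSupport η)
    (h : ∀ᵐ x ∂μ, fderiv ℝ η x = 0) : η = 0 := by
  obtain ⟨x₀, hx₀⟩ := (ne_univ_iff_exists_notMem _).1 hc.isCompact.ne_univ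
  have hfderiv : fderiv ℝ η = fun _ => 0 :=
    ((hη.continuous_fderiv one_ne_zero).ae_eq_iff_eq μ continuous_const).1 h
  funext x
  rw [is_const_of_fderiv_eq_zero (𝕜 := ℝ) (hη.differentiable one_ne_zero) (congrFun hfderiv) x x₀,
    image_eq_zero_of_notMem_tsupport hx₀, Pi.zero_apply]

lemma integral_fderiv_apply_sub [FiniteDimensional ℝ E] [MeasurableSpace E] [BorelSpace E]
    (μ : Measure E) [μ.IsAddHaarMeasure] (x₀ : E) {h : E → ℝ} (hh : ContDiff ℝ 1 h)
    (hc : HasCompactSupport h) :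
    ∫ x, fderiv ℝ h x (x - x₀) ∂μ = -(Module.finrank ℝ E * ∫ x, h x ∂μ) := by
  let b := Module.finBasis ℝ E
  let coord (i) : E →L[ℝ] ℝ := LinearMap.toContinuousLinearMap (b.coord i)
  have hfderiv : Continuous (fderiv ℝ h) := hh.continuous_fderiv one_ne_zero
  have hcoord (i) (x : E) : HasFDerivAt (fun x => coord i (x - x₀)) (coord i) x :=
    (coord i).hasFDerivAt.comp x ((hasFDerivAt_id x).sub_const x₀)
  have hcont (i) : Continuous fun x => coord i (x - x₀) := by fun_prop
  have hint (i) : Integrable (fun x => fderiv ℝ h x (b i) * coord i (x - x₀)) μ :=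
    ((hfderiv.clm_apply continuous_const).mul (hcont i)).integrable_of_hasCompactSupport
      (hc.fderiv_apply ℝ _).mul_right
  have hparts (i) : ∫ x, fderiv ℝ h x (b i) * coord i (x - x₀) ∂μ = -∫ x, h x ∂μ := by
    have hone (x : E) : fderiv ℝ (fun x => coord i (x - x₀)) x (b i) = 1 := by
      rw [(hcoord i x).fderiv]; simp [coord]
    have := integral_mul_fderiv_eq_neg_fderiv_mul_of_integrable (μ := μ) (f := h)
      (g := fun x => coord i (x - x₀)) (v := b i) (hint i)
      (by simpa only [hone, mul_one] using hh.continuous.integrable_of_hasCompactSupport hc)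
      ((hh.continuous.mul (hcont i)).integrable_of_hasCompactSupport hc.mul_right)
      (fun x _ => hh.differentiable one_ne_zero x)
      (fun x _ => (hcoord i x).differentiableAt)
    simp only [hone, mul_one] at this
    rw [this, neg_neg]
  have hexpand (x : E) : fderiv ℝ h x (x - x₀) =
      ∑ i, fderiv ℝ h x (b i) * coord i (x - x₀) := by
    conv_lhs => rw [← b.sum_repr (x - x₀)]
    simp only [map_sum, map_smul, smul_eq_mul]
    exact Finset.sum_congr rfl fun i _ => mul_comm _ _
  simp only [hexpand]
  rw [integral_finsetSum _ fun i _ => hint i]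
  simp only [hparts]
  simp

end Calculus

section Topology

lemma isCompact_sep_le_of_frontier_lt {X : Type*} [PseudoMetricSpace X] [ProperSpace X]
    {Ω : Set X} {d : X → ℝ} {ε : ℝ} (hΩ : IsOpen Ω) (hd : ContinuousOn d (closure Ω))
    (hfr : ∀ x ∈ frontier Ω, d x < ε) (hbdd : Bornology.IsBounded {x ∈ Ω | ε ≤ d x}) :
    IsCompact {x ∈ Ω | ε ≤ d x} := by
  have hset : {x ∈ Ω | ε ≤ d x} = closure Ω ∩ d ⁻¹' Ici ε := by
    refine Subset.antisymm (fun x hx => ⟨subset_closure hx.1, hx.2⟩) fun x ⟨hx, hεx⟩ => ⟨?_, hεx⟩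
    by_contra hxΩ
    exact (hfr x (hΩ.frontier_eq ▸ ⟨hx, hxΩ⟩)).not_ge hεx
  refine isCompact_of_isClosed_isBounded ?_ hbdd
  rw [hset]
  exact hd.preimage_isClosed_of_isClosed isClosed_closure isClosed_Ici

end Topology

section WeakDivergence

variable {E : Type*} [NormedAddCommGroup E] [NormedSpace ℝ E]
  {k : WithTop ℕ∞} {Ω : Set E} {φ ψ f f₁ f₂ : E → ℝ} {X X₁ X₂ : E → E}

/-- A nonnegative test function of class `C^k` on `Ω`. -/
structure IsNonnegTestFun (k : WithTop ℕ∞) (Ω : Set E) (ψ : E → ℝ) : Prop where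
  contDiff : ContDiff ℝ k ψ
  hasCompactSupport : HasCompactSupport ψ
  tsupport_subset : tsupport ψ ⊆ Ω
  nonneg : ∀ x, 0 ≤ ψ x

namespace IsNonnegTestFun

lemma of_le {l : WithTop ℕ∞} (hψ : IsNonnegTestFun k Ω ψ) (hl : l ≤ k) :
    IsNonnegTestFun l Ω ψ :=
  { hψ with contDiff := hψ.contDiff.of_le hl }

lemma mul {g : E → ℝ} (hψ : IsNonnegTestFun k Ω ψ) (hΩ : IsOpen Ω) (hg : ContDiffOn ℝ k g Ω)
    (hg0 : ∀ x ∈ Ω, 0 ≤ g x) : IsNonnegTestFun k Ω fun x => g x * ψ x := by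
  have hs : tsupport (fun x => g x * ψ x) ⊆ Ω :=
    tsupport_mul_subset_right.trans hψ.tsupport_subset
  refine ⟨contDiff_of_contDiffAt_tsupport fun x hx => ?_, hψ.hasCompactSupport.mul_left, hs,
    fun x => ?_⟩
  · exact (hg.contDiffAt (hΩ.mem_nhds (hs hx))).mul hψ.contDiff.contDiffAt
  · by_cases hx : x ∈ tsupport ψ
    · exact mul_nonneg (hg0 x (hψ.tsupport_subset hx)) (hψ.nonneg x)
    · rw [image_eq_zero_of_notMem_tsupport hx, mul_zero]

end IsNonnegTestFun

lemma fderiv_apply_add_mul_eq_zero_of_notMem_tsupport {x : E} (X : E → E) (f : E → ℝ)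
    (hx : x ∉ tsupport ψ) : fderiv ℝ ψ x (X x) + f x * ψ x = 0 := by
  rw [fderiv_of_notMem_tsupport ℝ hx, image_eq_zero_of_notMem_tsupport hx]
  simp

variable [MeasurableSpace E] {μ : Measure E}

/-- The distribution `f - div X`, with respect to the reference measure `μ`, applied to `ψ`. -/
def weakPairing (μ : Measure E) (X : E → E) (f ψ : E → ℝ) : ℝ :=
  ∫ x, (fderiv ℝ ψ x (X x) + f x * ψ x) ∂μ

/-- The inequality `f ≤ div X` in `Ω`, in the weak sense: the distribution `f - div X` is
nonpositive on nonnegative test functions of class `C^k`. -/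
def LeWeakDiv (μ : Measure E) (k : WithTop ℕ∞) (Ω : Set E) (f : E → ℝ) (X : E → E) : Prop :=
  ∀ ψ, IsNonnegTestFun k Ω ψ → weakPairing μ X f ψ ≤ 0

lemma weakPairing_congr (hψ : tsupport ψ ⊆ Ω) (hf : EqOn f₁ f₂ Ω) (hX : EqOn X₁ X₂ Ω) :
    weakPairing μ X₁ f₁ ψ = weakPairing μ X₂ f₂ ψ := by
  refine integral_congr_ae (.of_forall fun x => ?_)
  by_cases hx : x ∈ tsupport ψ
  · simp only [hf (hψ hx), hX (hψ hx)]
  · simp only [fderiv_apply_add_mul_eq_zero_of_notMem_tsupport _ _ hx]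

lemma LeWeakDiv.congr (h : LeWeakDiv μ k Ω f₁ X₁) (hf : EqOn f₁ f₂ Ω) (hX : EqOn X₁ X₂ Ω) :
    LeWeakDiv μ k Ω f₂ X₂ := fun ψ hψ =>
  weakPairing_congr hψ.tsupport_subset hf hX ▸ h ψ hψ

lemma LeWeakDiv.smul {g : E → ℝ} (h : LeWeakDiv μ 1 Ω f X) (hΩ : IsOpen Ω)
    (hg : ContDiffOn ℝ 1 g Ω) (hg0 : ∀ x ∈ Ω, 0 ≤ g x) :
    LeWeakDiv μ 1 Ω (fun x => g x * f x + fderiv ℝ g x (X x)) fun x => g x • X x := by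
  intro ψ hψ
  refine le_of_eq_of_le (integral_congr_ae (.of_forall fun x => ?_)) (h _ (hψ.mul hΩ hg hg0))
  by_cases hx : x ∈ tsupport ψ
  · have hgx := (hg.contDiffAt (hΩ.mem_nhds (hψ.tsupport_subset hx))).differentiableAt one_ne_zero
    have hψx := hψ.contDiff.differentiable one_ne_zero x
    simp only [fderiv_fun_mul hgx hψx, map_smul, add_apply, smul_apply, smul_eq_mul]
    ring
  · exact (fderiv_apply_add_mul_eq_zero_of_notMem_tsupport (fun x => g x • X x)
      (fun x => g x * f x + fderiv ℝ g x (X x)) hx).trans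
      (fderiv_apply_add_mul_eq_zero_of_notMem_tsupport X f
        fun h => hx (tsupport_mul_subset_right h)).symm

section Integrable

variable [OpensMeasurableSpace E] [IsFiniteMeasureOnCompacts μ]

lemma IsNonnegTestFun.integrable (hψ : IsNonnegTestFun 1 Ω ψ) (hΩ : IsOpen Ω)
    (hX : ContinuousOn X Ω) (hf : ContinuousOn f Ω) :
    Integrable (fun x => fderiv ℝ ψ x (X x) + f x * ψ x) μ := by
  have hsupp : Function.support (fun x => fderiv ℝ ψ x (X x) + f x * ψ x) ⊆ tsupport ψ :=
    fun x hx => by_contra fun hxψ => hx (fderiv_apply_add_mul_eq_zero_of_notMem_tsupport _ _ hxψ)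
  have hts := closure_minimal hsupp (isClosed_tsupport ψ)
  refine Continuous.integrable_of_hasCompactSupport (continuous_of_tsupport fun x hx => ?_)
    (hψ.hasCompactSupport.mono' hsupp)
  have hxΩ := hΩ.mem_nhds (hψ.tsupport_subset (hts hx))
  exact ((hψ.contDiff.continuous_fderiv one_ne_zero).continuousAt.clm_apply
    (hX.continuousAt hxΩ)).add ((hf.continuousAt hxΩ).mul hψ.contDiff.continuous.continuousAt)

lemma LeWeakDiv.ae_fderiv_apply_eq_zero (h : LeWeakDiv μ 1 Ω 0 X) (hψ : IsNonnegTestFun 1 Ω ψ)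
    (hΩ : IsOpen Ω) (hX : ContinuousOn X Ω) (hnonneg : ∀ x, 0 ≤ fderiv ℝ ψ x (X x)) :
    ∀ᵐ x ∂μ, fderiv ℝ ψ x (X x) = 0 := by
  have hint := hψ.integrable (μ := μ) (f := 0) hΩ hX continuousOn_const
  have hle := h ψ hψ
  simp only [weakPairing, Pi.zero_apply, zero_mul, add_zero] at hint hle
  exact (integral_eq_zero_iff_of_nonneg hnonneg hint).1 (hle.antisymm (integral_nonneg hnonneg))

lemma LeWeakDiv.add (h₁ : LeWeakDiv μ 1 Ω f₁ X₁) (h₂ : LeWeakDiv μ 1 Ω f₂ X₂) (hΩ : IsOpen Ω)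
    (hX₁ : ContinuousOn X₁ Ω) (hX₂ : ContinuousOn X₂ Ω) (hf₁ : ContinuousOn f₁ Ω)
    (hf₂ : ContinuousOn f₂ Ω) :
    LeWeakDiv μ 1 Ω (fun x => f₁ x + f₂ x) fun x => X₁ x + X₂ x := by
  intro ψ hψ
  have hsplit : weakPairing μ (fun x => X₁ x + X₂ x) (fun x => f₁ x + f₂ x) ψ =
      weakPairing μ X₁ f₁ ψ + weakPairing μ X₂ f₂ ψ := by
    rw [weakPairing, weakPairing, weakPairing,
      ← integral_add (hψ.integrable hΩ hX₁ hf₁) (hψ.integrable hΩ hX₂ hf₂)]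
    congr 1 with x
    rw [map_add]
    ring
  exact hsplit.trans_le (add_nonpos (h₁ ψ hψ) (h₂ ψ hψ))

lemma weakPairing_sub_le (hΩ : IsOpen Ω) (hX : ContinuousOn X Ω) (hf : ContinuousOn f Ω)
    (hψ : IsNonnegTestFun 1 Ω ψ) (hφ : IsNonnegTestFun 1 Ω φ) {K : Set E} (hK : IsCompact K)
    (hψK : tsupport ψ ⊆ K) (hφK : tsupport φ ⊆ K) {A B ε : ℝ} (hA : ∀ x ∈ K, ‖X x‖ ≤ A)
    (hB : ∀ x ∈ K, ‖f x‖ ≤ B) (h0 : ∀ x, ‖ψ x - φ x‖ ≤ ε)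
    (h1 : ∀ x, ‖fderiv ℝ ψ x - fderiv ℝ φ x‖ ≤ ε) :
    weakPairing μ X f ψ - weakPairing μ X f φ ≤ ε * ((A + B) * μ.real K) := by
  have hε : 0 ≤ ε := (norm_nonneg _).trans (h0 0)
  rw [weakPairing, weakPairing, ← integral_sub (hψ.integrable hΩ hX hf) (hφ.integrable hΩ hX hf),
    ← setIntegral_eq_integral_of_forall_compl_eq_zero (s := K) fun x hx => by
      rw [fderiv_apply_add_mul_eq_zero_of_notMem_tsupport _ _ fun h => hx (hψK h),
        fderiv_apply_add_mul_eq_zero_of_notMem_tsupport _ _ fun h => hx (hφK h), sub_zero]]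
  have hbound : ∀ x ∈ K, ‖fderiv ℝ ψ x (X x) + f x * ψ x - (fderiv ℝ φ x (X x) + f x * φ x)‖ ≤
      ε * (A + B) := fun x hx => calc
    _ = ‖(fderiv ℝ ψ x - fderiv ℝ φ x) (X x) + (ψ x - φ x) * f x‖ := by
      rw [sub_apply]; congr 1; ring
    _ ≤ ‖fderiv ℝ ψ x - fderiv ℝ φ x‖ * ‖X x‖ + ‖ψ x - φ x‖ * ‖f x‖ :=
      (norm_add_le _ _).trans (add_le_add (ContinuousLinearMap.le_opNorm _ _) (norm_mul_le _ _))
    _ ≤ ε * A + ε * B := by gcongr <;> solve_by_elim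
    _ = ε * (A + B) := by ring
  refine (le_abs_self _).trans ?_
  rw [← mul_assoc]
  exact norm_setIntegral_le_of_norm_le_const hK.measure_lt_top hbound

lemma LeWeakDiv.of_infty [FiniteDimensional ℝ E] (h : LeWeakDiv μ ∞ Ω f X) (hΩ : IsOpen Ω)
    (hX : ContinuousOn X Ω) (hf : ContinuousOn f Ω) : LeWeakDiv μ 1 Ω f X := by
  intro ψ hψ
  obtain ⟨δ, hδ, hKΩ⟩ :=
    hψ.hasCompactSupport.isCompact.exists_cthickening_subset_open hΩ hψ.tsupport_subset
  let K := cthickening δ (tsupport ψ)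
  have hK : IsCompact K := hψ.hasCompactSupport.isCompact.cthickening
  obtain ⟨A, hA⟩ := hK.exists_bound_of_continuousOn (hX.mono hKΩ)
  obtain ⟨B, hB⟩ := hK.exists_bound_of_continuousOn (hf.mono hKΩ)
  have hle (ε : ℝ) (hε : 0 < ε) : weakPairing μ X f ψ ≤ ε * ((A + B) * μ.real K) := by
    obtain ⟨φ, hφ, hφK, hφ0, happrox, happrox'⟩ := exists_contDiff_infty_approx hψ.contDiff
      hψ.hasCompactSupport hψ.nonneg hδ hε
    have hφtest : IsNonnegTestFun ∞ Ω φ :=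
      ⟨hφ, hK.of_isClosed_subset (isClosed_tsupport φ) hφK, hφK.trans hKΩ, hφ0⟩
    have hdiff := weakPairing_sub_le (μ := μ) hΩ hX hf hψ (hφtest.of_le (by norm_num)) hK
      (self_subset_cthickening _) hφK hA hB
      (fun x => by rw [norm_sub_rev]; exact happrox x)
      (fun x => by rw [norm_sub_rev]; exact happrox' x)
    linarith [h φ hφtest]
  have hlim : Tendsto (fun ε => ε * ((A + B) * μ.real K)) (𝓝[>] 0) (𝓝 0) :=
    ((continuous_mul_const _).tendsto' 0 0 (zero_mul _)).mono_left nhdsWithin_le_nhds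
  exact ge_of_tendsto hlim (eventually_mem_nhdsWithin.mono hle)

end Integrable

lemma leWeakDiv_smul_sub [FiniteDimensional ℝ E] [BorelSpace E] [μ.IsAddHaarMeasure] (c : ℝ)
    (x₀ : E) : LeWeakDiv μ 1 Ω (fun _ => c * Module.finrank ℝ E) fun x => c • (x - x₀) := by
  intro ψ hψ
  have hint : Integrable (fun x => fderiv ℝ ψ x (x - x₀)) μ :=
    ((hψ.contDiff.continuous_fderiv one_ne_zero).clm_apply
      (by fun_prop)).integrable_of_hasCompactSupport
      ((hψ.hasCompactSupport.fderiv ℝ).mono fun x hx h0 => hx (by simp [h0]))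
  have hzero : weakPairing μ (fun x => c • (x - x₀)) (fun _ => c * Module.finrank ℝ E) ψ = 0 := by
    simp only [weakPairing, map_smul, smul_eq_mul, mul_assoc]
    rw [integral_add (hint.const_mul c), integral_const_mul, integral_const_mul,
      integral_const_mul, integral_fderiv_apply_sub μ x₀ hψ.contDiff hψ.hasCompactSupport]
    · ring
    · exact ((hψ.contDiff.continuous.integrable_of_hasCompactSupport
        hψ.hasCompactSupport).const_mul _).const_mul c
  exact hzero.le

end WeakDivergence

section Comparison

variable {E : Type*} [NormedAddCommGroup E] {Ω : Set E} {v w : E → ℝ} {ε : ℝ}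

/-- The test function of the comparison principle: `v - w - ε`, truncated smoothly at level zero
and extended by zero outside `Ω`. -/
def truncatedGap (Ω : Set E) (v w : E → ℝ) (ε : ℝ) : E → ℝ :=
  Ω.indicator fun x => expNegInvGlue (v x - w x - ε)

lemma isNonnegTestFun_truncatedGap [NormedSpace ℝ E] (hΩ : IsOpen Ω) (hv : ContDiffOn ℝ 1 v Ω)
    (hw : ContDiffOn ℝ 1 w Ω) (hK : IsCompact {x ∈ Ω | ε ≤ v x - w x}) :
    IsNonnegTestFun 1 Ω (truncatedGap Ω v w ε) := by
  have hts : tsupport (truncatedGap Ω v w ε) ⊆ {x ∈ Ω | ε ≤ v x - w x} := by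
    refine tsupport_indicator_subset_of_eq_zero hK.isClosed fun x hx => ?_
    have : v x - w x < ε := not_le.1 fun h => hx.2 ⟨hx.1, h⟩
    exact expNegInvGlue.zero_of_nonpos (by linarith)
  exact
    { contDiff := contDiff_indicator_of_tsupport_subset hΩ
        (expNegInvGlue.contDiff.comp_contDiffOn ((hv.sub hw).sub contDiffOn_const))
        (hts.trans (sep_subset _ _))
      hasCompactSupport := hK.of_isClosed_subset (isClosed_tsupport _) hts
      tsupport_subset := hts.trans (sep_subset _ _)
      nonneg := fun x => indicator_nonneg (fun _ _ => expNegInvGlue.nonneg _) x }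

variable [InnerProductSpace ℝ E]

lemma continuousOn_gradient [CompleteSpace E] (hv : ContDiffOn ℝ 1 v Ω) (hΩ : IsOpen Ω) :
    ContinuousOn (∇ v) Ω :=
  (InnerProductSpace.toDual ℝ E).symm.continuous.comp_continuousOn
    (hv.continuousOn_fderiv_of_isOpen hΩ le_rfl)

lemma fderiv_truncatedGap_apply [CompleteSpace E] (hΩ : IsOpen Ω) (hv : ContDiffOn ℝ 1 v Ω)
    (hw : ContDiffOn ℝ 1 w Ω) {x : E} (hx : x ∈ Ω) (y : E) :
    fderiv ℝ (truncatedGap Ω v w ε) x y =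
      deriv expNegInvGlue (v x - w x - ε) * ⟪y, ∇ v x - ∇ w x⟫ := by
  have hdiff {z : E → ℝ} (hz : ContDiffOn ℝ 1 z Ω) : HasFDerivAt z (fderiv ℝ z x) x :=
    ((hz.contDiffAt (hΩ.mem_nhds hx)).differentiableAt one_ne_zero).hasFDerivAt
  have hglue := (expNegInvGlue.contDiff.differentiable one_ne_zero (v x - w x - ε)).hasDerivAt
  have hderiv : HasFDerivAt (truncatedGap Ω v w ε)
      (deriv expNegInvGlue (v x - w x - ε) • (fderiv ℝ v x - fderiv ℝ w x)) x :=
    (hglue.comp_hasFDerivAt x (((hdiff hv).sub (hdiff hw)).sub_const ε)).congr_of_eventuallyEq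
      (eventuallyEq_indicator (fun x => expNegInvGlue (v x - w x - ε)) hΩ hx)
  rw [hderiv.fderiv, real_inner_comm, inner_sub_left, inner_gradient_left,
    inner_gradient_left, smul_apply, sub_apply, smul_eq_mul]

/- Testing with `η = truncatedGap Ω v w ε` makes `⟪a (∇ v) - a (∇ w), ∇ η⟫` a nonnegative function
with nonpositive integral. Strict monotonicity then forces `∇ η = 0`, so that `η = 0`. -/
theorem le_of_leWeakDiv_sub [FiniteDimensional ℝ E] [Nontrivial E] [MeasurableSpace E]
    [BorelSpace E] {μ : Measure E} [IsFiniteMeasureOnCompacts μ] [μ.IsOpenPosMeasure] {a : E → E}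
    (ha : Continuous a) (hmono : ∀ ξ η, ξ ≠ η → 0 < ⟪a ξ - a η, ξ - η⟫) (hΩ : IsOpen Ω)
    (hv : ContDiffOn ℝ 1 v Ω) (hw : ContDiffOn ℝ 1 w Ω)
    (hdiv : LeWeakDiv μ 1 Ω 0 fun x => a (∇ v x) - a (∇ w x))
    (hK : ∀ ε > 0, IsCompact {x ∈ Ω | ε ≤ v x - w x}) {x : E} (hx : x ∈ Ω) : v x ≤ w x := by
  refine le_of_forall_pos_le_add fun ε hε => ?_
  let X (y : E) : E := a (∇ v y) - a (∇ w y)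
  have hX : ContinuousOn X Ω := (ha.comp_continuousOn (continuousOn_gradient hv hΩ)).sub
    (ha.comp_continuousOn (continuousOn_gradient hw hΩ))
  have htest := isNonnegTestFun_truncatedGap hΩ hv hw (hK ε hε)
  have hfderiv {y : E} (hy : y ∈ Ω) := fderiv_truncatedGap_apply (ε := ε) hΩ hv hw hy
  have hoff {y : E} (hy : y ∉ Ω) : fderiv ℝ (truncatedGap Ω v w ε) y = 0 :=
    fderiv_of_notMem_tsupport ℝ fun h => hy (htest.tsupport_subset h)
  have hnonneg (y : E) : 0 ≤ fderiv ℝ (truncatedGap Ω v w ε) y (X y) := by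
    by_cases hy : y ∈ Ω
    · rw [hfderiv hy]
      refine mul_nonneg expNegInvGlue.monotone.deriv_nonneg ?_
      rcases eq_or_ne (∇ v y) (∇ w y) with h | h
      · rw [h, sub_self, inner_zero_right]
      · exact (hmono _ _ h).le
    · rw [hoff hy, zero_apply]
  have hzero : ∀ᵐ y ∂μ, fderiv ℝ (truncatedGap Ω v w ε) y = 0 := by
    filter_upwards [hdiv.ae_fderiv_apply_eq_zero htest hΩ hX hnonneg] with y hXy
    by_cases hy : y ∈ Ω
    · rw [hfderiv hy, mul_eq_zero] at hXy
      ext z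
      rw [hfderiv hy, zero_apply]
      rcases hXy with h | h
      · rw [h, zero_mul]
      · rw [not_ne_iff.1 fun hne => (hmono _ _ hne).ne' h, sub_self, inner_zero_right, mul_zero]
    · exact hoff hy
  have hvalue := congrFun
    (eq_zero_of_ae_fderiv_eq_zero htest.contDiff htest.hasCompactSupport hzero) x
  rw [truncatedGap, indicator_of_mem hx, Pi.zero_apply, expNegInvGlue.zero_iff_nonpos] at hvalue
  linarith

theorem le_of_leWeakDiv [FiniteDimensional ℝ E] [Nontrivial E] [MeasurableSpace E]
    [BorelSpace E] {μ : Measure E} [IsFiniteMeasureOnCompacts μ] [μ.IsOpenPosMeasure] {a : E → E}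
    (ha : Continuous a) (hmono : ∀ ξ η, ξ ≠ η → 0 < ⟪a ξ - a η, ξ - η⟫) (hΩ : IsOpen Ω)
    (hv : ContDiffOn ℝ 1 v Ω) (hw : ContDiffOn ℝ 1 w Ω)
    (hsub : LeWeakDiv μ 1 Ω 0 fun x => a (∇ v x)) (hsuper : LeWeakDiv μ 1 Ω 0 fun x => -a (∇ w x))
    (hK : ∀ ε > 0, IsCompact {x ∈ Ω | ε ≤ v x - w x}) {x : E} (hx : x ∈ Ω) : v x ≤ w x := by
  have hdiv := hsub.add hsuper hΩ (ha.comp_continuousOn (continuousOn_gradient hv hΩ))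
    (ha.comp_continuousOn (continuousOn_gradient hw hΩ)).neg continuousOn_const
    continuousOn_const
  exact le_of_leWeakDiv_sub ha hmono hΩ hv hw
    (hdiv.congr (fun _ _ => add_zero 0) fun _ _ => (sub_eq_add_neg _ _).symm) hK hx

end Comparison

namespace MinkowskiNorm

variable {n : ℕ} (N : MinkowskiNorm n)

lemma map_zero : N.F 0 = 0 := by
  simpa using N.homog 0 le_rfl 0

lemma nonneg (ξ : En n) : 0 ≤ N.F ξ := by
  rcases eq_or_ne ξ 0 with rfl | hξ
  · exact N.map_zero.ge
  · exact (N.pos ξ hξ).le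

lemma ne_zero_of_map_pos {ξ : En n} (h : 0 < N.F ξ) : ξ ≠ 0 := by
  rintro rfl
  exact h.ne' N.map_zero

lemma add_le (ξ η : En n) : N.F (ξ + η) ≤ N.F ξ + N.F η := by
  have h := N.convexOn.2 (mem_univ ξ) (mem_univ η) (by norm_num : (0 : ℝ) ≤ 1 / 2)
    (by norm_num : (0 : ℝ) ≤ 1 / 2) (by norm_num)
  rw [← smul_add, N.homog _ (by norm_num), smul_eq_mul, smul_eq_mul] at h
  linarith

lemma continuous : Continuous N.F :=
  continuousOn_univ.1 (N.convexOn.continuousOn isOpen_univ)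

lemma contDiffAt {ξ : En n} (hξ : ξ ≠ 0) : ContDiffAt ℝ ∞ N.F ξ :=
  N.smooth.contDiffAt (isOpen_compl_singleton.mem_nhds hξ)

lemma differentiableAt {ξ : En n} (hξ : ξ ≠ 0) : DifferentiableAt ℝ N.F ξ :=
  (N.contDiffAt hξ).differentiableAt (by simp)

lemma map_inv_norm_smul (ξ : En n) : N.F (‖ξ‖⁻¹ • ξ) = N.F ξ / ‖ξ‖ := by
  rw [N.homog _ (by positivity), div_eq_inv_mul]

lemma exists_le_mul_norm : ∃ M : ℝ, 0 ≤ M ∧ ∀ ξ, N.F ξ ≤ M * ‖ξ‖ := by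
  obtain ⟨M, hM⟩ :=
    (isCompact_closedBall (0 : En n) 1).bddAbove_image N.continuous.continuousOn
  rw [mem_upperBounds, forall_mem_image] at hM
  refine ⟨M, N.map_zero ▸ hM (by simp), fun ξ => ?_⟩
  rcases eq_or_ne ξ 0 with rfl | hξ
  · simp [N.map_zero]
  · rw [← div_le_iff₀ (norm_pos_iff.2 hξ), ← N.map_inv_norm_smul]
    exact hM (by simp [norm_smul, hξ])

lemma exists_norm_le_mul : ∃ m : ℝ, 0 ≤ m ∧ ∀ ξ, ‖ξ‖ ≤ m * N.F ξ := by
  obtain ⟨c, hc, hle⟩ := (isCompact_sphere (0 : En n) 1).exists_forall_le'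
    N.continuous.continuousOn fun ξ hξ => N.pos ξ (ne_zero_of_mem_unit_sphere ⟨ξ, hξ⟩)
  refine ⟨c⁻¹, by positivity, fun ξ => ?_⟩
  rcases eq_or_ne ξ 0 with rfl | hξ
  · simp [N.map_zero]
  · rw [le_inv_mul_iff₀ hc, ← le_div_iff₀ (norm_pos_iff.2 hξ), ← N.map_inv_norm_smul]
    exact hle _ (by simp [norm_smul, hξ])

section Gradient

variable {ξ η ν : En n}

lemma hasDerivAt_line (hξ : ξ ≠ 0) (η : En n) :
    HasDerivAt (fun t : ℝ => N.F (ξ + t • η)) ⟪∇ N.F ξ, η⟫ 0 := by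
  have hF : HasFDerivAt N.F (fderiv ℝ N.F ξ) (ξ + (0 : ℝ) • η) := by
    simpa using (N.differentiableAt hξ).hasFDerivAt
  have hline : HasDerivAt (fun t : ℝ => ξ + t • η) η 0 := by
    simpa using ((hasDerivAt_id (0 : ℝ)).smul_const η).const_add ξ
  rw [inner_gradient_left]
  exact hF.comp_hasDerivAt (0 : ℝ) hline

lemma inner_gradient_le (hξ : ξ ≠ 0) (η : En n) : ⟪∇ N.F ξ, η⟫ ≤ N.F η := by
  have hslope := (N.hasDerivAt_line hξ η).hasDerivWithinAt (s := Ioi 0)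
  rw [hasDerivWithinAt_iff_tendsto_slope' (by simp)] at hslope
  refine le_of_tendsto hslope ?_
  filter_upwards [self_mem_nhdsWithin] with t (ht : 0 < t)
  have hadd := N.add_le ξ (t • η)
  rw [N.homog t ht.le] at hadd
  rw [slope_def_field, div_le_iff₀ (by simpa using ht), zero_smul, add_zero, sub_zero]
  linarith

lemma inner_gradient_self (hξ : ξ ≠ 0) : ⟪∇ N.F ξ, ξ⟫ = N.F ξ := by
  have hlin : HasDerivAt (fun t : ℝ => (1 + t) * N.F ξ) (N.F ξ) 0 := by
    simpa using ((hasDerivAt_id (0 : ℝ)).const_add 1).mul_const (N.F ξ)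
  refine (N.hasDerivAt_line hξ ξ).unique (hlin.congr_of_eventuallyEq ?_)
  filter_upwards [Ioi_mem_nhds (show (-1 : ℝ) < 0 by norm_num)] with t (ht : -1 < t)
  rw [← N.homog (1 + t) (by linarith), add_smul, one_smul]

lemma gradient_eq_of_inner_le (hξ : ξ ≠ 0) (hν : ∀ ζ, ⟪ν, ζ⟫ ≤ N.F ζ) (h : ⟪ν, ξ⟫ = N.F ξ) :
    ∇ N.F ξ = ν := by
  have hmin : IsLocalMin (fun ζ => N.F ζ - ⟪ν, ζ⟫) ξ := .of_forall fun ζ => by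
    simpa only [h, sub_self, sub_nonneg] using hν ζ
  have hderiv : fderiv ℝ N.F ξ - innerSL ℝ ν = 0 :=
    hmin.hasFDerivAt_eq_zero ((N.differentiableAt hξ).hasFDerivAt.sub (innerSL ℝ ν).hasFDerivAt)
  refine ext_inner_right ℝ fun ζ => ?_
  rw [inner_gradient_left, sub_eq_zero.1 hderiv, innerSL_apply_apply]

lemma gradient_smul {c : ℝ} (hc : 0 < c) (hξ : ξ ≠ 0) : ∇ N.F (c • ξ) = ∇ N.F ξ :=
  N.gradient_eq_of_inner_le (smul_ne_zero hc.ne' hξ) (N.inner_gradient_le hξ) <| by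
    rw [real_inner_smul_right, N.inner_gradient_self hξ, N.homog c hc.le]

lemma norm_gradient_le {M : ℝ} (hM : ∀ ζ, N.F ζ ≤ M * ‖ζ‖) (hξ : ξ ≠ 0) : ‖∇ N.F ξ‖ ≤ M := by
  rcases eq_or_ne (∇ N.F ξ) 0 with h0 | h0
  · rw [h0, norm_zero]
    exact nonneg_of_mul_nonneg_left ((N.nonneg ξ).trans (hM ξ)) (norm_pos_iff.2 hξ)
  · have h := (N.inner_gradient_le hξ (∇ N.F ξ)).trans (hM _)
    rw [real_inner_self_eq_norm_mul_norm] at h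
    exact le_of_mul_le_mul_right h (norm_pos_iff.2 h0)

lemma map_segment_eq_of_inner_eq (hν : ∀ ζ, ⟪ν, ζ⟫ ≤ N.F ζ) (hξ : ⟪ν, ξ⟫ = N.F ξ)
    (hη : ⟪ν, η⟫ = N.F η) (h : N.F ξ = N.F η) {t : ℝ} (ht : t ∈ Icc (0 : ℝ) 1) :
    N.F (ξ + t • (η - ξ)) = N.F ξ := by
  refine le_antisymm ?_ ?_
  · calc N.F (ξ + t • (η - ξ)) = N.F ((1 - t) • ξ + t • η) := by congr 1; module
      _ ≤ (1 - t) * N.F ξ + t * N.F η :=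
        N.convexOn.2 (mem_univ ξ) (mem_univ η) (sub_nonneg.2 ht.2) ht.1 (by ring)
      _ = N.F ξ := by rw [← h]; ring
  · calc N.F ξ = ⟪ν, ξ + t • (η - ξ)⟫ := by
          rw [inner_add_right, real_inner_smul_right, inner_sub_right, hξ, hη, h]; ring
      _ ≤ N.F (ξ + t • (η - ξ)) := hν _

/- Strict convexity of the unit ball: otherwise `F ^ 2 / 2` would be constant near the midpoint of
the segment `[ξ, η]` in the direction `η - ξ`, against ellipticity. -/
lemma eq_of_inner_eq (hν : ∀ ζ, ⟪ν, ζ⟫ ≤ N.F ζ) (hξ : ⟪ν, ξ⟫ = N.F ξ)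
    (hη : ⟪ν, η⟫ = N.F η) (h : N.F ξ = N.F η) (hξ0 : ξ ≠ 0) : ξ = η := by
  by_contra hne
  have hsegment {t : ℝ} (ht : t ∈ Icc (0 : ℝ) 1) := N.map_segment_eq_of_inner_eq hν hξ hη h ht
  set m := ξ + (1 / 2 : ℝ) • (η - ξ) with hm
  have hm0 : m ≠ 0 :=
    N.ne_zero_of_map_pos ((N.pos ξ hξ0).trans_eq (hsegment (by norm_num)).symm)
  have hsmooth : ContDiffAt ℝ 2 (fun y => N.F y ^ 2 / 2) m :=
    (((N.contDiffAt hm0).of_le (WithTop.coe_le_coe.2 le_top)).pow 2).div_const 2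
  refine (N.elliptic m hm0 (η - ξ) (sub_ne_zero.2 (Ne.symm hne))).ne'
    (fderiv_fderiv_apply_self_eq_zero_of_eventually_const (c := N.F ξ ^ 2 / 2) hsmooth ?_)
  filter_upwards [Ioo_mem_nhds (by norm_num : (-(1 / 2) : ℝ) < 0)
    (by norm_num : (0 : ℝ) < 1 / 2)] with t ht
  rw [hm, add_assoc, ← add_smul, hsegment ⟨by linarith [ht.1], by linarith [ht.2]⟩]

end Gradient

section Flux

/-- The flux `F(ξ)^{p-1} F_ξ(ξ)` of the Finsler `p`-Laplacian. -/
def flux (p : ℝ) (ξ : En n) : En n := N.F ξ ^ (p - 1) • ∇ N.F ξ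

variable {p : ℝ}

lemma flux_zero (hp : 1 < p) : N.flux p 0 = 0 := by
  rw [flux, N.map_zero, Real.zero_rpow (by linarith), zero_smul]

lemma flux_smul (hp : 1 < p) {c : ℝ} (hc : 0 < c) (ξ : En n) :
    N.flux p (c • ξ) = c ^ (p - 1) • N.flux p ξ := by
  rcases eq_or_ne ξ 0 with rfl | hξ
  · rw [smul_zero, N.flux_zero hp, smul_zero]
  · rw [flux, flux, N.gradient_smul hc hξ, N.homog c hc.le,
      Real.mul_rpow hc.le (N.nonneg ξ), smul_smul]

lemma rpow_sub_one_mul_self (hp : 1 < p) (ξ : En n) : N.F ξ ^ (p - 1) * N.F ξ = N.F ξ ^ p := by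
  rw [← Real.rpow_add_one' (N.nonneg ξ) (by linarith), sub_add_cancel]

lemma inner_flux_self (hp : 1 < p) (ξ : En n) : ⟪N.flux p ξ, ξ⟫ = N.F ξ ^ p := by
  rw [← N.rpow_sub_one_mul_self hp]
  rcases eq_or_ne ξ 0 with rfl | hξ
  · rw [inner_zero_right, N.map_zero, mul_zero]
  · rw [flux, real_inner_smul_left, N.inner_gradient_self hξ]

lemma inner_flux_le (hp : 1 < p) (ξ η : En n) :
    ⟪N.flux p ξ, η⟫ ≤ N.F ξ ^ (p - 1) * N.F η := by
  rcases eq_or_ne ξ 0 with rfl | hξ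
  · rw [N.flux_zero hp, inner_zero_left, N.map_zero, Real.zero_rpow (by linarith), zero_mul]
  · rw [flux, real_inner_smul_left]
    exact mul_le_mul_of_nonneg_left (N.inner_gradient_le hξ η) (Real.rpow_nonneg (N.nonneg ξ) _)

lemma eq_of_inner_flux_eq {ξ η : En n} (hF : N.F ξ = N.F η) (hξ : ξ ≠ 0)
    (h : ⟪N.flux p ξ, η⟫ = N.F ξ ^ (p - 1) * N.F η) : ξ = η := by
  rw [flux, real_inner_smul_left] at h
  have hη : ⟪∇ N.F ξ, η⟫ = N.F η :=
    mul_left_cancel₀ (Real.rpow_pos_of_pos (N.pos ξ hξ) _).ne' h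
  exact N.eq_of_inner_eq (N.inner_gradient_le hξ) (N.inner_gradient_self hξ) hη hF hξ

lemma norm_flux_le (hp : 1 < p) {M : ℝ} (hM0 : 0 ≤ M) (hM : ∀ ζ, N.F ζ ≤ M * ‖ζ‖) (ξ : En n) :
    ‖N.flux p ξ‖ ≤ N.F ξ ^ (p - 1) * M := by
  have hpow : 0 ≤ N.F ξ ^ (p - 1) := Real.rpow_nonneg (N.nonneg ξ) _
  rcases eq_or_ne ξ 0 with rfl | hξ
  · rw [N.flux_zero hp, norm_zero]
    positivity
  · rw [flux, norm_smul, Real.norm_of_nonneg hpow]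
    exact mul_le_mul_of_nonneg_left (N.norm_gradient_le hM hξ) hpow

lemma continuous_flux (hp : 1 < p) : Continuous (N.flux p) := by
  refine continuous_iff_continuousAt.2 fun ξ => ?_
  have hpow : Continuous fun ξ => N.F ξ ^ (p - 1) :=
    N.continuous.rpow_const fun _ => Or.inr (by linarith)
  rcases eq_or_ne ξ 0 with rfl | hξ
  · obtain ⟨M, hM0, hM⟩ := N.exists_le_mul_norm
    have hlim : Tendsto (fun ξ => N.F ξ ^ (p - 1) * M) (𝓝 0) (𝓝 0) :=
      (hpow.mul_const M).tendsto' 0 0 (by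
        rw [N.map_zero, Real.zero_rpow (by linarith), zero_mul])
    rw [ContinuousAt, N.flux_zero hp]
    exact squeeze_zero_norm (N.norm_flux_le hp hM0 hM) hlim
  · exact hpow.continuousAt.smul ((continuousOn_gradient (N.smooth.of_le (by norm_num))
      isOpen_compl_singleton).continuousAt (isOpen_compl_singleton.mem_nhds hξ))

lemma inner_flux_sub (hp : 1 < p) (ξ η : En n) :
    ⟪N.flux p ξ - N.flux p η, ξ - η⟫ =
      (N.F ξ ^ (p - 1) - N.F η ^ (p - 1)) * (N.F ξ - N.F η) +
      (N.F ξ ^ (p - 1) * N.F η - ⟪N.flux p ξ, η⟫) +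
      (N.F η ^ (p - 1) * N.F ξ - ⟪N.flux p η, ξ⟫) := by
  rw [inner_sub_left, inner_sub_right, inner_sub_right, N.inner_flux_self hp,
    N.inner_flux_self hp, ← N.rpow_sub_one_mul_self hp, ← N.rpow_sub_one_mul_self hp]
  ring

theorem inner_flux_sub_pos (hp : 1 < p) {ξ η : En n} (hne : ξ ≠ η) :
    0 < ⟪N.flux p ξ - N.flux p η, ξ - η⟫ := by
  wlog hle : N.F η ≤ N.F ξ generalizing ξ η
  · rw [← inner_neg_neg, neg_sub, neg_sub]
    exact this hne.symm (le_of_not_ge hle)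
  have hξη := N.inner_flux_le hp ξ η
  have hηξ := N.inner_flux_le hp η ξ
  rw [N.inner_flux_sub hp]
  rcases hle.lt_or_eq with hlt | heq
  · have : 0 < (N.F ξ ^ (p - 1) - N.F η ^ (p - 1)) * (N.F ξ - N.F η) :=
      mul_pos (sub_pos.2 (Real.rpow_lt_rpow (N.nonneg η) hlt (by linarith))) (sub_pos.2 hlt)
    linarith
  · have hξ : ξ ≠ 0 := by
      rintro rfl
      exact N.ne_zero_of_map_pos (N.pos η hne.symm |>.trans_eq heq) rfl
    have hlt := hξη.lt_of_ne fun h => hne (N.eq_of_inner_flux_eq heq.symm hξ h)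
    have hzero : (N.F ξ ^ (p - 1) - N.F η ^ (p - 1)) * (N.F ξ - N.F η) = 0 := by
      rw [heq, sub_self, zero_mul]
    linarith

end Flux

section Polar

lemma isCompact_indicatrix : IsCompact {ξ | N.F ξ = 1} := by
  obtain ⟨m, -, hm⟩ := N.exists_norm_le_mul
  refine isCompact_of_isClosed_isBounded (isClosed_eq N.continuous continuous_const)
    ((isBounded_closedBall (x := 0) (r := m)).subset fun ξ hξ => ?_)
  simpa [show N.F ξ = 1 from hξ] using hm ξ

variable [Nontrivial (En n)]

lemma exists_polarF_eq (x : En n) :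
    ∃ ξ, N.F ξ = 1 ∧ ⟪ξ, x⟫ = polarF N x ∧ ∀ ζ, ⟪ζ, x⟫ ≤ polarF N x * N.F ζ := by
  have hnormalize (ζ : En n) (hζ : ζ ≠ 0) : N.F ((N.F ζ)⁻¹ • ζ) = 1 := by
    rw [N.homog _ (inv_nonneg.2 (N.nonneg ζ)), inv_mul_cancel₀ (N.pos ζ hζ).ne']
  have hne : {ξ | N.F ξ = 1}.Nonempty := by
    obtain ⟨ζ, hζ⟩ := exists_ne (0 : En n)
    exact ⟨_, hnormalize ζ hζ⟩
  obtain ⟨ξ, hξ : N.F ξ = 1, hmax⟩ := N.isCompact_indicatrix.exists_isMaxOn hne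
    (f := fun ξ : En n => ⟪ξ, x⟫) (by fun_prop)
  have hle (ζ : En n) (hζ : ζ ≠ 0) : ⟪ζ, x⟫ / N.F ζ ≤ ⟪ξ, x⟫ := by
    rw [div_eq_inv_mul, ← real_inner_smul_left]
    exact hmax (hnormalize ζ hζ)
  have hpolar : polarF N x = ⟪ξ, x⟫ := by
    refine IsGreatest.csSup_eq
      ⟨⟨ξ, N.ne_zero_of_map_pos (hξ ▸ one_pos), by rw [hξ, div_one]⟩, ?_⟩
    rintro c ⟨ζ, hζ, rfl⟩
    exact hle ζ hζ
  refine ⟨ξ, hξ, hpolar.symm, fun ζ => ?_⟩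
  rcases eq_or_ne ζ 0 with rfl | hζ
  · simp [N.map_zero]
  · rw [hpolar, ← div_le_iff₀ (N.pos ζ hζ)]
    exact hle ζ hζ

/-- The point of the indicatrix `F = 1` at which the supremum defining `F^o(x)` is attained. For
`x ≠ 0` it is unique, and it is the gradient of `F^o` at `x`. -/
def dualPoint (x : En n) : En n := (N.exists_polarF_eq x).choose

lemma map_dualPoint (x : En n) : N.F (N.dualPoint x) = 1 :=
  (N.exists_polarF_eq x).choose_spec.1

lemma inner_dualPoint (x : En n) : ⟪N.dualPoint x, x⟫ = polarF N x :=
  (N.exists_polarF_eq x).choose_spec.2.1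

lemma dualPoint_ne_zero (x : En n) : N.dualPoint x ≠ 0 :=
  N.ne_zero_of_map_pos (N.map_dualPoint x ▸ one_pos)

lemma inner_le_polarF_mul (x ζ : En n) : ⟪ζ, x⟫ ≤ polarF N x * N.F ζ :=
  (N.exists_polarF_eq x).choose_spec.2.2 ζ

lemma polarF_zero : polarF N 0 = 0 := by
  rw [← N.inner_dualPoint, inner_zero_right]

lemma polarF_pos {x : En n} (hx : x ≠ 0) : 0 < polarF N x :=
  pos_of_mul_pos_left ((real_inner_self_pos.2 hx).trans_le (N.inner_le_polarF_mul x x))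
    (N.nonneg x)

lemma ne_zero_of_polarF_pos {x : En n} (h : 0 < polarF N x) : x ≠ 0 := by
  rintro rfl
  exact h.ne' N.polarF_zero

lemma exists_norm_le_mul_polarF : ∃ M : ℝ, 0 ≤ M ∧ ∀ x, ‖x‖ ≤ M * polarF N x := by
  obtain ⟨M, hM0, hM⟩ := N.exists_le_mul_norm
  refine ⟨M, hM0, fun x => ?_⟩
  rcases eq_or_ne x 0 with rfl | hx
  · simp [N.polarF_zero]
  · refine le_of_mul_le_mul_right ?_ (norm_pos_iff.2 hx)
    calc ‖x‖ * ‖x‖ = ⟪x, x⟫ := (real_inner_self_eq_norm_mul_norm x).symm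
      _ ≤ polarF N x * N.F x := N.inner_le_polarF_mul x x
      _ ≤ polarF N x * (M * ‖x‖) := mul_le_mul_of_nonneg_left (hM x) (N.polarF_pos hx).le
      _ = M * polarF N x * ‖x‖ := by ring

lemma polarF_sub_le (x y : En n) : polarF N y - polarF N x ≤ ⟪N.dualPoint y, y - x⟫ := by
  have h := N.inner_le_polarF_mul x (N.dualPoint y)
  rw [N.map_dualPoint, mul_one] at h
  rw [inner_sub_right, N.inner_dualPoint]
  linarith

lemma continuous_polarF : Continuous (polarF N) := by
  obtain ⟨m, hm0, hm⟩ := N.exists_norm_le_mul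
  refine (LipschitzWith.of_le_add_mul ⟨m, hm0⟩ fun y x => ?_).continuous
  have hdual : ‖N.dualPoint y‖ ≤ m := by simpa [N.map_dualPoint] using hm (N.dualPoint y)
  have hinner : ⟪N.dualPoint y, y - x⟫ ≤ m * dist y x := by
    rw [dist_eq_norm]
    exact (real_inner_le_norm _ _).trans (mul_le_mul_of_nonneg_right hdual (norm_nonneg _))
  exact sub_le_iff_le_add'.1 ((N.polarF_sub_le x y).trans hinner)

variable {x : En n}

lemma inner_inv_polarF_smul_le (hx : x ≠ 0) (ζ : En n) : ⟪(polarF N x)⁻¹ • x, ζ⟫ ≤ N.F ζ := by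
  rw [real_inner_smul_left, real_inner_comm, inv_mul_le_iff₀ (N.polarF_pos hx)]
  exact N.inner_le_polarF_mul x ζ

lemma inner_inv_polarF_smul_eq_one (hx : x ≠ 0) {ξ : En n} (h : ⟪ξ, x⟫ = polarF N x) :
    ⟪(polarF N x)⁻¹ • x, ξ⟫ = 1 := by
  rw [real_inner_smul_left, real_inner_comm, h, inv_mul_cancel₀ (N.polarF_pos hx).ne']

lemma eq_dualPoint (hx : x ≠ 0) {ξ : En n} (hξ : N.F ξ = 1) (h : ⟪ξ, x⟫ = polarF N x) :
    ξ = N.dualPoint x :=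
  N.eq_of_inner_eq (N.inner_inv_polarF_smul_le hx)
    ((N.inner_inv_polarF_smul_eq_one hx h).trans hξ.symm)
    ((N.inner_inv_polarF_smul_eq_one hx (N.inner_dualPoint x)).trans (N.map_dualPoint x).symm)
    (hξ.trans (N.map_dualPoint x).symm) (N.ne_zero_of_map_pos (hξ ▸ one_pos))

lemma gradient_dualPoint (hx : x ≠ 0) : ∇ N.F (N.dualPoint x) = (polarF N x)⁻¹ • x :=
  N.gradient_eq_of_inner_le (N.dualPoint_ne_zero x) (N.inner_inv_polarF_smul_le hx)
    ((N.inner_inv_polarF_smul_eq_one hx (N.inner_dualPoint x)).trans (N.map_dualPoint x).symm)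

/- Every limit point of dual points is a maximizer for the limit, and the maximizer is unique. -/
lemma continuousAt_dualPoint (hx : x ≠ 0) : ContinuousAt N.dualPoint x := by
  refine N.isCompact_indicatrix.tendsto_nhds_of_unique_mapClusterPt
    (.of_forall N.map_dualPoint) fun ζ hζ hcluster => ?_
  obtain ⟨U, hU, hlim⟩ := mapClusterPt_iff_ultrafilter.1 hcluster
  have hinner : Tendsto (fun y => ⟪N.dualPoint y, y⟫) U (𝓝 ⟪ζ, x⟫) := hlim.inner hU
  simp only [N.inner_dualPoint] at hinner
  exact N.eq_dualPoint hx hζ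
    (tendsto_nhds_unique hinner ((N.continuous_polarF.tendsto x).mono_left hU))

lemma hasGradientAt_polarF (hx : x ≠ 0) : HasGradientAt (polarF N) (N.dualPoint x) x := by
  rw [hasGradientAt_iff_isLittleO, Asymptotics.isLittleO_iff]
  intro ε hε
  filter_upwards [continuousAt_iff'.1 (N.continuousAt_dualPoint hx) ε hε] with y hy
  have hupper := N.polarF_sub_le x y
  have hlower := N.polarF_sub_le y x
  have herror : ⟪N.dualPoint y - N.dualPoint x, y - x⟫ ≤ ε * ‖y - x‖ :=
    (real_inner_le_norm _ _).trans
      (mul_le_mul_of_nonneg_right (dist_eq_norm (N.dualPoint y) _ ▸ hy.le) (norm_nonneg _))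
  rw [inner_sub_left] at herror
  rw [← neg_sub y x, inner_neg_right] at hlower
  rw [Real.norm_of_nonneg (by linarith)]
  linarith

lemma contDiffAt_polarF (hx : x ≠ 0) : ContDiffAt ℝ 1 (polarF N) x := by
  refine contDiffAt_one_iff.2 ⟨fun y => InnerProductSpace.toDual ℝ (En n) (N.dualPoint y), {0}ᶜ,
    isOpen_compl_singleton.mem_nhds hx, fun y hy => ?_,
    fun y hy => (N.hasGradientAt_polarF hy).hasFDerivAt⟩
  exact ((InnerProductSpace.toDual ℝ (En n)).continuous.continuousAt.comp
    (N.continuousAt_dualPoint hy)).continuousWithinAt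

end Polar

end MinkowskiNorm

section ExpTransform

/-- The increasing substitution `t ↦ -exp (-t / (p - 1))`. It turns solutions of
`div (F(∇u)^{p-1} F_ξ(∇u)) = F(∇u)^p` into Finsler `p`-harmonic functions. -/
def expTransform (p t : ℝ) : ℝ := -Real.exp (-(t / (p - 1)))

variable {p : ℝ}

lemma strictMono_expTransform (hp : 1 < p) : StrictMono (expTransform p) := fun _ _ hst =>
  neg_lt_neg (Real.exp_lt_exp.2 (neg_lt_neg (div_lt_div_of_pos_right hst (sub_pos.2 hp))))

lemma expTransform_neg (p t : ℝ) : expTransform p t < 0 :=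
  neg_neg_of_pos (Real.exp_pos _)

lemma expTransform_neg_mul_log (hp : p ≠ 1) {ε : ℝ} (hε : 0 < ε) :
    expTransform p (-((p - 1) * Real.log ε)) = -ε := by
  rw [expTransform, neg_div, neg_neg, mul_div_cancel_left₀ _ (sub_ne_zero.2 hp), Real.exp_log hε]

lemma contDiff_expTransform (p : ℝ) : ContDiff ℝ ∞ (expTransform p) :=
  (contDiff_id.div_const (p - 1)).neg.exp.neg

lemma hasDerivAt_expTransform (p t : ℝ) :
    HasDerivAt (expTransform p) ((p - 1)⁻¹ * Real.exp (-(t / (p - 1)))) t := by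
  refine (((hasDerivAt_id t).div_const (p - 1)).fun_neg.exp).fun_neg.congr_deriv ?_
  simp only [id]
  ring

lemma gradient_comp_of_hasDerivAt {E : Type*} [NormedAddCommGroup E] [InnerProductSpace ℝ E]
    [CompleteSpace E] {φ : ℝ → ℝ} {c : ℝ} {u : E → ℝ} {x : E} (hφ : HasDerivAt φ c (u x))
    (hu : DifferentiableAt ℝ u x) : ∇ (fun y => φ (u y)) x = c • ∇ u x := by
  have hcomp : HasFDerivAt (fun y => φ (u y)) (c • fderiv ℝ u x) x :=
    hφ.comp_hasFDerivAt x hu.hasFDerivAt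
  rw [gradient, hcomp.fderiv, map_smul, gradient]

lemma MinkowskiNorm.flux_gradient_expTransform {n : ℕ} (N : MinkowskiNorm n) (hp : 1 < p)
    {u : En n → ℝ} {x : En n} (hu : DifferentiableAt ℝ u x) :
    N.flux p (∇ (fun y => expTransform p (u y)) x) =
      ((p - 1)⁻¹ ^ (p - 1) * Real.exp (-u x)) • N.flux p (∇ u x) := by
  have hp' : 0 < p - 1 := sub_pos.2 hp
  rw [gradient_comp_of_hasDerivAt (hasDerivAt_expTransform p (u x)) hu,
    N.flux_smul hp (by positivity), Real.mul_rpow (by positivity) (by positivity),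
    ← Real.exp_mul, neg_mul, div_mul_cancel₀ _ hp'.ne']

end ExpTransform

namespace MinkowskiNorm

section Subsolution

variable {n : ℕ} (N : MinkowskiNorm n) {p : ℝ} {Ω : Set (En n)} {u : En n → ℝ}

/-- Weak subsolutions of `div (F(∇u)^{p-1} F_ξ(∇u)) = F(∇u)^p` in `Ω`, tested against nonnegative
smooth functions. -/
def IsWeakPSubSol (Ω : Set (En n)) (p : ℝ) (u : En n → ℝ) : Prop :=
  LeWeakDiv volume ∞ Ω (fun x => N.F (∇ u x) ^ p) fun x => N.flux p (∇ u x)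

lemma continuousOn_flux_gradient (hp : 1 < p) (hΩ : IsOpen Ω) (hu : ContDiffOn ℝ 1 u Ω) :
    ContinuousOn (fun x => N.flux p (∇ u x)) Ω :=
  (N.continuous_flux hp).comp_continuousOn (continuousOn_gradient hu hΩ)

lemma continuousOn_map_gradient_rpow (hp : 1 < p) (hΩ : IsOpen Ω) (hu : ContDiffOn ℝ 1 u Ω) :
    ContinuousOn (fun x => N.F (∇ u x) ^ p) Ω :=
  (N.continuous.comp_continuousOn (continuousOn_gradient hu hΩ)).rpow_const
    fun _ _ => Or.inr (by linarith)

variable {N}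

lemma _root_.IsWeakPSol.isWeakPSubSol (hp : 1 < p) (hΩ : IsOpen Ω) (hu : ContDiffOn ℝ 1 u Ω)
    (h : IsWeakPSol N Ω p u) : N.IsWeakPSubSol Ω p u := by
  intro ψ hψ
  have htest : IsNonnegTestFun 1 Ω ψ := hψ.of_le (by norm_num)
  have hoff {x : En n} (hx : x ∉ Ω) : x ∉ tsupport ψ := fun hxψ => hx (hψ.tsupport_subset hxψ)
  have hflux : Integrable (fun x => fderiv ℝ ψ x (N.flux p (∇ u x))) := by
    simpa using htest.integrable (μ := volume) (f := 0) hΩ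
      (N.continuousOn_flux_gradient hp hΩ hu) continuousOn_const
  have hsource : Integrable (fun x => N.F (∇ u x) ^ p * ψ x) := by
    simpa using htest.integrable (μ := volume) (X := 0) hΩ continuousOn_const
      (N.continuousOn_map_gradient_rpow hp hΩ hu)
  have hinner (x : En n) : fderiv ℝ ψ x (N.flux p (∇ u x)) =
      N.F (∇ u x) ^ (p - 1) * ⟪∇ N.F (∇ u x), ∇ ψ x⟫ := by
    rw [← inner_gradient_left, real_inner_comm, flux, real_inner_smul_left]
  rw [weakPairing, integral_add hflux hsource,
    ← setIntegral_eq_integral_of_forall_compl_eq_zero (s := Ω) fun x hx => by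
      rw [fderiv_of_notMem_tsupport ℝ (hoff hx), zero_apply],
    ← setIntegral_eq_integral_of_forall_compl_eq_zero (s := Ω)
      (f := fun x => N.F (∇ u x) ^ p * ψ x) fun x hx => by
      rw [image_eq_zero_of_notMem_tsupport (hoff hx), mul_zero]]
  simp only [hinner, h ψ ⟨hψ.contDiff, hψ.hasCompactSupport, hψ.tsupport_subset⟩,
    neg_add_cancel, le_refl]

theorem IsWeakPSubSol.leWeakDiv_expTransform (h : N.IsWeakPSubSol Ω p u) (hp : 1 < p)
    (hΩ : IsOpen Ω) (hu : ContDiffOn ℝ 1 u Ω) :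
    LeWeakDiv volume 1 Ω 0 fun x => N.flux p (∇ (fun y => expTransform p (u y)) x) := by
  let κ : ℝ := (p - 1)⁻¹ ^ (p - 1)
  let g (x : En n) : ℝ := κ * Real.exp (-u x)
  have hg : ContDiffOn ℝ 1 g Ω := contDiffOn_const.mul hu.neg.exp
  have hg0 : ∀ x ∈ Ω, 0 ≤ g x := fun x _ =>
    mul_nonneg (Real.rpow_nonneg (inv_nonneg.2 (by linarith)) _) (Real.exp_pos _).le
  have hdiff {x : En n} (hx : x ∈ Ω) : DifferentiableAt ℝ u x :=
    (hu.contDiffAt (hΩ.mem_nhds hx)).differentiableAt one_ne_zero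
  have hC1 := h.of_infty hΩ (N.continuousOn_flux_gradient hp hΩ hu)
    (N.continuousOn_map_gradient_rpow hp hΩ hu)
  refine (hC1.smul hΩ hg hg0).congr (fun x hx => ?_) fun x hx =>
    (N.flux_gradient_expTransform hp (hdiff hx)).symm
  have hfderiv : HasFDerivAt g (κ • Real.exp (-u x) • -fderiv ℝ u x) x :=
    (hdiff hx).hasFDerivAt.neg.exp.const_mul κ
  have hself : fderiv ℝ u x (N.flux p (∇ u x)) = N.F (∇ u x) ^ p := by
    rw [← inner_gradient_left, real_inner_comm, N.inner_flux_self hp]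
  simp only [hfderiv.fderiv, smul_apply, neg_apply, hself, smul_eq_mul, Pi.zero_apply, g]
  ring

end Subsolution

section Barrier

variable {n : ℕ} (N : MinkowskiNorm n) {p r ε : ℝ} {x x₀ : En n} {Ω : Set (En n)} {u : En n → ℝ}

/-- The right-hand side of the estimate: a radial solution of
`div (F(∇b)^{p-1} F_ξ(∇b)) = F(∇b)^p` on `ℝⁿ ∖ {x₀}` that vanishes on the boundary of `W_r(x₀)`.
At `x₀` it takes the junk value `0`. -/
def barrier (p r : ℝ) (x₀ x : En n) : ℝ := (n - p) * Real.log (polarF N (x - x₀) / r)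

lemma barrier_nonneg (hpn : p ≤ n) (hr : 0 < r) (h : r ≤ polarF N (x - x₀)) :
    0 ≤ N.barrier p r x₀ x :=
  mul_nonneg (sub_nonneg.2 hpn) (Real.log_nonneg ((one_le_div hr).2 h))

variable [Nontrivial (En n)]

lemma isBounded_barrier_le (hpn : p < n) (hr : 0 < r) (x₀ : En n) (B : ℝ) :
    Bornology.IsBounded {x | N.barrier p r x₀ x ≤ B} := by
  obtain ⟨M, hM, hle⟩ := N.exists_norm_le_mul_polarF
  refine (isBounded_closedBall (x := x₀) (r := M * (Real.exp (B / (n - p)) * r))).subset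
    fun x hx => ?_
  have hlog : Real.log (polarF N (x - x₀) / r) ≤ B / (n - p) :=
    (le_div_iff₀' (sub_pos.2 hpn)).2 hx
  rw [mem_closedBall, dist_eq_norm]
  exact (hle _).trans (mul_le_mul_of_nonneg_left
    ((div_le_iff₀ hr).1 (Real.le_exp_of_log_le hlog)) hM)

lemma contDiffAt_polarF_sub (hx : x - x₀ ≠ 0) :
    ContDiffAt ℝ 1 (fun x => polarF N (x - x₀)) x :=
  ContDiffAt.comp (g := polarF N) (f := fun x => x - x₀) x (N.contDiffAt_polarF hx)
    (contDiffAt_id.sub contDiffAt_const)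

lemma gradient_polarF_sub (hx : x - x₀ ≠ 0) :
    ∇ (fun x => polarF N (x - x₀)) x = N.dualPoint (x - x₀) :=
  HasGradientAt.gradient
    ((hasFDerivAt_comp_sub x₀).2 (N.hasGradientAt_polarF hx).hasFDerivAt)

lemma fderiv_mul_inv_polarF_pow (c : ℝ) (hx : x - x₀ ≠ 0) :
    fderiv ℝ (fun x => c * (polarF N (x - x₀) ^ n)⁻¹) x (x - x₀) =
      -(n * (c * (polarF N (x - x₀) ^ n)⁻¹)) := by
  have hP := (N.polarF_pos hx).ne'
  have hpow : HasDerivAt (fun t : ℝ => c * (t ^ n)⁻¹)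
      (-(n * (c * (polarF N (x - x₀) ^ n)⁻¹)) * (polarF N (x - x₀))⁻¹) (polarF N (x - x₀)) := by
    have hzpow := (hasDerivAt_zpow (-(n : ℤ)) _ (Or.inl hP)).const_mul c
    simp only [zpow_sub_one₀ hP, zpow_neg, zpow_natCast, Int.cast_neg, Int.cast_natCast] at hzpow
    exact hzpow.congr_deriv (by ring)
  rw [← inner_gradient_left, gradient_comp_of_hasDerivAt (u := fun x => polarF N (x - x₀)) hpow
    ((N.contDiffAt_polarF_sub hx).differentiableAt one_ne_zero), real_inner_smul_left,
    N.gradient_polarF_sub hx, N.inner_dualPoint, inv_mul_cancel_right₀ hP]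

lemma contDiffAt_barrier (p : ℝ) (hr : r ≠ 0) (hx : x - x₀ ≠ 0) :
    ContDiffAt ℝ 1 (N.barrier p r x₀) x :=
  contDiffAt_const.mul (((N.contDiffAt_polarF_sub hx).div_const r).log
    (div_ne_zero (N.polarF_pos hx).ne' hr))

lemma gradient_barrier (p : ℝ) (hr : r ≠ 0) (hx : x - x₀ ≠ 0) :
    ∇ (N.barrier p r x₀) x = ((n - p) / polarF N (x - x₀)) • N.dualPoint (x - x₀) := by
  have hP := (N.polarF_pos hx).ne'
  have hlog : HasDerivAt (fun t => (n - p) * Real.log (t / r)) ((n - p) / polarF N (x - x₀))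
      (polarF N (x - x₀)) := by
    refine ((((hasDerivAt_id (polarF N (x - x₀))).div_const r).log
      (div_ne_zero hP hr)).const_mul (n - p : ℝ)).congr_deriv ?_
    simp only [id]
    field_simp
  rw [← N.gradient_polarF_sub hx]
  exact gradient_comp_of_hasDerivAt (u := fun x => polarF N (x - x₀)) hlog
    ((N.contDiffAt_polarF_sub hx).differentiableAt one_ne_zero)

lemma flux_dualPoint (p : ℝ) (hx : x ≠ 0) : N.flux p (N.dualPoint x) = (polarF N x)⁻¹ • x := by
  rw [flux, N.map_dualPoint, Real.one_rpow, one_smul, N.gradient_dualPoint hx]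

lemma exp_neg_barrier (p : ℝ) (hr : 0 < r) (hx : x - x₀ ≠ 0) :
    Real.exp (-N.barrier p r x₀ x) = r ^ (n - p) * polarF N (x - x₀) ^ (p - n) := by
  have hP := N.polarF_pos hx
  rw [barrier, Real.log_div hP.ne' hr.ne', Real.rpow_def_of_pos hr, Real.rpow_def_of_pos hP,
    ← Real.exp_add]
  congr 1
  ring

lemma exp_neg_barrier_smul_flux (hp : 1 < p) (hpn : p < n) (hr : 0 < r) (hx : x - x₀ ≠ 0) :
    Real.exp (-N.barrier p r x₀ x) • N.flux p (∇ (N.barrier p r x₀) x) =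
      (r ^ (n - p) * (n - p) ^ (p - 1) * (polarF N (x - x₀) ^ n)⁻¹) • (x - x₀) := by
  have hP := N.polarF_pos hx
  have hnp : 0 < n - p := sub_pos.2 hpn
  have hpow : polarF N (x - x₀) ^ (p - n) * (polarF N (x - x₀) ^ (p - 1))⁻¹ *
      (polarF N (x - x₀))⁻¹ = (polarF N (x - x₀) ^ n)⁻¹ := by
    rw [← Real.rpow_neg hP.le, ← Real.rpow_neg_one, ← Real.rpow_add hP, ← Real.rpow_add hP,
      ← Real.rpow_natCast, ← Real.rpow_neg hP.le]
    congr 1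
    ring
  rw [N.gradient_barrier p hr.ne' hx, N.flux_smul hp (div_pos hnp hP), N.flux_dualPoint p hx,
    N.exp_neg_barrier p hr hx, Real.div_rpow hnp.le hP.le, smul_smul, smul_smul, ← hpow]
  congr 1
  ring

/- `x - x₀` has divergence `n` and `F^o(x - x₀)^{-n}` is homogeneous of degree `-n` about `x₀`,
so the two terms of the product rule cancel. -/
lemma leWeakDiv_smul_inv_polarF_pow {c : ℝ} (hc : 0 ≤ c) (hΩ : IsOpen Ω)
    (hx₀ : x₀ ∉ Ω) :
    LeWeakDiv volume 1 Ω 0 fun x => -((c * (polarF N (x - x₀) ^ n)⁻¹) • (x - x₀)) := by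
  let g (x : En n) : ℝ := c * (polarF N (x - x₀) ^ n)⁻¹
  have hne {x : En n} (hx : x ∈ Ω) : x - x₀ ≠ 0 := sub_ne_zero.2 fun h => hx₀ (h ▸ hx)
  have hg : ContDiffOn ℝ 1 g Ω := fun x hx =>
    (contDiffAt_const.mul (((N.contDiffAt_polarF_sub (hne hx)).pow n).inv
      (pow_ne_zero n (N.polarF_pos (hne hx)).ne'))).contDiffWithinAt
  have hg0 : ∀ x ∈ Ω, 0 ≤ g x := fun x hx =>
    mul_nonneg hc (inv_nonneg.2 (pow_nonneg (N.polarF_pos (hne hx)).le n))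
  refine ((leWeakDiv_smul_sub (μ := volume) (-1) x₀).smul hΩ hg hg0).congr (fun x hx => ?_)
    fun x _ => by simp only [g, neg_smul, one_smul, smul_neg]
  have hfderiv : fderiv ℝ g x (x - x₀) = -(n * g x) := N.fderiv_mul_inv_polarF_pow c (hne hx)
  simp only [finrank_euclideanSpace_fin, map_smul, hfderiv, smul_eq_mul, Pi.zero_apply]
  ring

theorem leWeakDiv_neg_flux_expTransform_barrier (hp : 1 < p) (hpn : p < n)
    (hr : 0 < r) (hΩ : IsOpen Ω) (hx₀ : x₀ ∉ Ω) : LeWeakDiv volume 1 Ω 0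
      fun x => -N.flux p (∇ (fun y => expTransform p (N.barrier p r x₀ y)) x) := by
  have hc : 0 ≤ (p - 1)⁻¹ ^ (p - 1) * (r ^ (n - p) * (n - p) ^ (p - 1)) :=
    mul_nonneg (Real.rpow_nonneg (inv_nonneg.2 (sub_pos.2 hp).le) _)
      (mul_nonneg (Real.rpow_nonneg hr.le _) (Real.rpow_nonneg (sub_pos.2 hpn).le _))
  refine (N.leWeakDiv_smul_inv_polarF_pow hc hΩ hx₀).congr (fun _ _ => rfl) fun x hx => ?_
  have hne : x - x₀ ≠ 0 := sub_ne_zero.2 fun h => hx₀ (h ▸ hx)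
  simp only [N.flux_gradient_expTransform hp
    ((N.contDiffAt_barrier p hr.ne' hne).differentiableAt one_ne_zero), mul_smul,
    N.exp_neg_barrier_smul_flux hp hpn hr hne]

lemma le_polarF_sub_of_wulff_subset (hin : Wulff N r x₀ ⊆ Ωᶜ) (hx : x ∈ closure Ω) :
    r ≤ polarF N (x - x₀) :=
  closure_minimal (fun _ hy => not_lt.1 fun hlt => hin hlt hy)
    (isClosed_le continuous_const (N.continuous_polarF.comp (continuous_id.sub continuous_const)))
    hx

lemma isCompact_le_expTransform_sub_barrier (hp : 1 < p) (hpn : p < n) (hr : 0 < r)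
    (hΩ : IsOpen Ω) (hu : ContinuousOn u (closure Ω)) (hbc : ∀ x ∈ frontier Ω, u x ≤ 0)
    (hP : ∀ x ∈ closure Ω, r ≤ polarF N (x - x₀)) (hε : 0 < ε) :
    IsCompact {x ∈ Ω | ε ≤ expTransform p (u x) - expTransform p (N.barrier p r x₀ x)} := by
  have hφ := (contDiff_expTransform p).continuous
  have hmono := strictMono_expTransform hp
  have hb : ContinuousOn (N.barrier p r x₀) (closure Ω) := fun x hx =>
    (N.contDiffAt_barrier p hr.ne'
      (N.ne_zero_of_polarF_pos (hr.trans_le (hP x hx)))).continuousAt.continuousWithinAt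
  refine isCompact_sep_le_of_frontier_lt hΩ
    ((hφ.comp_continuousOn hu).sub (hφ.comp_continuousOn hb)) (fun x hx => ?_)
    ((N.isBounded_barrier_le hpn hr x₀ (-((p - 1) * Real.log ε))).subset fun x ⟨_, hx⟩ => ?_)
  · have hle : u x ≤ N.barrier p r x₀ x :=
      (hbc x hx).trans (N.barrier_nonneg hpn.le hr (hP x (frontier_subset_closure hx)))
    exact (sub_nonpos.2 (hmono.monotone hle)).trans_lt hε
  · refine hmono.le_iff_le.1 ?_
    rw [expTransform_neg_mul_log hp.ne' hε]
    linarith [expTransform_neg p (u x)]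

end Barrier

end MinkowskiNorm

theorem statement11_general (n : ℕ) (N : MinkowskiNorm n) (Ω : Set (En n)) (hΩ : IsOpen Ω)
    (p : ℝ) (hp1 : 1 < p) (hpn : p < n) (u : En n → ℝ) (hu : ContDiffOn ℝ 1 u Ω)
    (hcont : ContinuousOn u (closure Ω)) (hsub : N.IsWeakPSubSol Ω p u)
    (hbc : ∀ x ∈ frontier Ω, u x ≤ 0)
    (r : ℝ) (hr : 0 < r) (x₀ : En n) (hin : Wulff N r x₀ ⊆ Ωᶜ) :
    ∀ x ∈ Ω, u x ≤ (n - p) * Real.log (polarF N (x - x₀) / r) := by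
  intro x hx
  have hn : 0 < n := by exact_mod_cast (zero_lt_one.trans hp1).trans hpn
  have : Nonempty (Fin n) := ⟨⟨0, hn⟩⟩
  have hP (y : En n) (hy : y ∈ closure Ω) := N.le_polarF_sub_of_wulff_subset hin hy
  have hne {y : En n} (hy : y ∈ Ω) : y - x₀ ≠ 0 :=
    N.ne_zero_of_polarF_pos (hr.trans_le (hP y (subset_closure hy)))
  have hx₀ : x₀ ∉ Ω := fun h => hne h (sub_self x₀)
  have hb : ContDiffOn ℝ 1 (N.barrier p r x₀) Ω := fun y hy =>
    (N.contDiffAt_barrier p hr.ne' (hne hy)).contDiffWithinAt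
  have hφ : ContDiff ℝ 1 (expTransform p) := (contDiff_expTransform p).of_le (by norm_num)
  exact (strictMono_expTransform hp1).le_iff_le.1 <| le_of_leWeakDiv (N.continuous_flux hp1)
    (fun _ _ => N.inner_flux_sub_pos hp1) hΩ (hφ.comp_contDiffOn hu) (hφ.comp_contDiffOn hb)
    (hsub.leWeakDiv_expTransform hp1 hΩ hu)
    (N.leWeakDiv_neg_flux_expTransform_barrier hp1 hpn hr hΩ hx₀)
    (fun ε hε => N.isCompact_le_expTransform_sub_barrier hp1 hpn hr hΩ hcont hbc hP hε) hx

/-- If the Wulff shape `W_r(x₀)` is contained in `Ωᶜ`, then the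
solution `u_p` of the approximate problem satisfies
`u_p(x) ≤ (n-p)·log(F^o(x-x₀)/r)` in `Ω`. -/
theorem statement11 (n : ℕ) (N : MinkowskiNorm n)
    (Ω : Set (En n)) (hΩ : IsOpen Ω) (hsb : HasSmoothBoundary Ω)
    (hbd : Bornology.IsBounded Ωᶜ)
    (p : ℝ) (hp1 : 1 < p) (hpn : p < n)
    (u : En n → ℝ) (hC1 : ContDiffOn ℝ 1 u (closure Ω))
    (hsol : IsWeakPSol N Ω p u)
    (hbc : ∀ x ∈ frontier Ω, u x = 0)
    (hlim : Tendsto u (cocompact (En n)) atTop)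
    (r : ℝ) (hr : 0 < r) (x₀ : En n) (hin : Wulff N r x₀ ⊆ Ωᶜ) :
    ∀ x ∈ Ω, u x ≤ (n - p) * Real.log (polarF N (x - x₀) / r) := by
  have hu : ContDiffOn ℝ 1 u Ω := hC1.mono subset_closure
  exact statement11_general n N Ω hΩ p hp1 hpn u hu hC1.continuousOn
    (hsol.isWeakPSubSol hp1 hΩ hu) (fun x hx => (hbc x hx).le) r hr x₀ hin
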